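/- Let m ≥ 2, let k > 1 be a divisor of n, set n' = n/k, let ζ be a primitive nm-th root of unity, and let ḡ ∈ G(m,1,n) be the monomial matrix sending e_i ↦ e_{i−1} (2 ≤ i ≤ n) and e_1 ↦ ζ^n e_n. Let E be the ζ^{n'}-eigenspace of ḡ^{n'}. Then E = C ě_1 ⊕ ... ⊕ C ě_{n'}, where ě_j = (1/√k) Σ_{p=0}^{k−1} ζ^{p n'} e_{j + p n'} (1 ≤ j ≤ n'), and the reflection subquotient π_E(N_E) (where N_E = {s ∈ G(m,1,n) : s(E) = E} and π_E is restriction to E) is isomorphic, via a C-linear isomorphism E ≅ C^{n'}, to G(km, 1, n'); that is, the km-reflection subquotient of G(m,1,n) is isomorphic to G(km, 1, n/k). -/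

import Mathlib

/-!
A vector of `ℂⁿ` is the same thing as a function `f : ℤ → ℂ` with `f (x + n) = χ * f x`, for a
fixed `χ ≠ 0`. If `χ` is a primitive `m`-th root of unity, then in this model `G(m,1,n)` consists
of the substitutions `f ↦ f ∘ T`, where `T` is a permutation of `ℤ` commuting with `x ↦ x + n`; for
`χ = ζⁿ` the matrix `ḡ` is the substitution of `x ↦ x + 1`. Hence, for `ω = ζ^n'` and `n = k n'`,
the `ω`-eigenspace of `ḡ^n'` is the space of functions with `f (x + n') = ω * f x`, which is the
model of `ℂ^n'` attached to `ω`. A permutation commuting with `x ↦ x + n'` also commutes with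
`x ↦ x + n`, so every element of `G(km,1,n')` extends to `N_E`. Conversely a substitution of
`G(m,1,n)` that preserves `E` acts on `E` as a surjective substitution, and this makes it monomial.
-/

open Matrix MvPolynomial

namespace Paper

noncomputable section

/-- The standard Hermitian inner product `(v, w) = Σ v_i conj(w_i)` on `ℂ^N`. -/
def herm {N : ℕ} (v w : Fin N → ℂ) : ℂ := ∑ i, v i * (starRingEnd ℂ) (w i)

/-- The reflection `s(v, λ) : w ↦ w - (1 - λ) ((w,v)/(v,v)) v` with root `v` and
nontrivial eigenvalue `λ`, as a matrix. -/
def reflMat {N : ℕ} (v : Fin N → ℂ) (lam : ℂ) : Matrix (Fin N) (Fin N) ℂ :=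
  Matrix.of fun i j =>
    (if i = j then (1 : ℂ) else 0) - (1 - lam) * v i * (starRingEnd ℂ) (v j) / herm v v

/-- The monomial matrix `ι(θ, σ)` with `e_i ↦ θ_{σ(i)} e_{σ(i)}`. -/
def monomialMatrix {N : ℕ} (θ : Fin N → ℂ) (σ : Equiv.Perm (Fin N)) :
    Matrix (Fin N) (Fin N) ℂ :=
  Matrix.of fun j i => if j = σ i then θ (σ i) else 0

/-- The imprimitive reflection group `G(m, p, N)`: all monomial `N × N` matrices whose
nonzero entries are `m`-th roots of unity and whose product of nonzero entries is an
`(m/p)`-th root of unity. -/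
def Gimp (m p N : ℕ) : Set (Matrix (Fin N) (Fin N) ℂ) :=
  {M | ∃ (θ : Fin N → ℂ) (σ : Equiv.Perm (Fin N)),
    (∀ i, θ i ^ m = 1) ∧ (∏ i, θ i) ^ (m / p) = 1 ∧ M = monomialMatrix θ σ}

/-- The `μ`-eigenspace of (the linear map of) a matrix. -/
def eigSpace {n : ℕ} (M : Matrix (Fin n) (Fin n) ℂ) (μ : ℂ) : Submodule ℂ (Fin n → ℂ) :=
  Module.End.eigenspace M.mulVecLin μ

open scoped AddConstMap

section Quasiperiodic

variable {K : Type*} [Field K] {f : ℤ → K} {n d : ℕ} {χ : K}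

/-- Quasi-periodicity with multiplier `χ`: a step of length `d` multiplies the function by `χ`. -/
def IsQuasiperiodic (f : ℤ → K) (d : ℕ) (χ : K) : Prop :=
  ∀ x, f (x + d) = χ * f x

theorem IsQuasiperiodic.add_nat_mul (hf : IsQuasiperiodic f d χ) (x : ℤ) (q : ℕ) :
    f (x + q * d) = χ ^ q * f x := by
  induction q with
  | zero => simp
  | succ q ih =>
    rw [Nat.cast_succ, add_one_mul, ← add_assoc, hf, ih, pow_succ', mul_assoc]

theorem IsQuasiperiodic.add_int_mul (hf : IsQuasiperiodic f d χ) (hχ : χ ≠ 0) (x q : ℤ) :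
    f (x + q * d) = χ ^ q * f x := by
  obtain ⟨p, rfl | rfl⟩ := q.eq_nat_or_neg
  · rw [hf.add_nat_mul, zpow_natCast]
  · have hback := hf.add_nat_mul (x + -p * d) p
    rw [neg_mul, neg_add_cancel_right] at hback
    rw [neg_mul, hback, _root_.zpow_neg, zpow_natCast, inv_mul_cancel_left₀ (pow_ne_zero p hχ)]

theorem IsQuasiperiodic.pow (hf : IsQuasiperiodic f d χ) (k : ℕ) :
    IsQuasiperiodic f (k * d) (χ ^ k) := fun x => by
  rw [Nat.cast_mul, hf.add_nat_mul]

theorem IsQuasiperiodic.comp (hf : IsQuasiperiodic f n χ) {T : ℤ → ℤ}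
    (hT : ∀ x, T (x + n) = T x + n) : IsQuasiperiodic (f ∘ T) n χ := fun x => by
  rw [Function.comp_apply, hT, hf, Function.comp_apply]

/-- The restriction of a function on `ℤ` to `{0, …, n - 1}`, as a linear map to `Kⁿ`. -/
def window (n : ℕ) : (ℤ → K) →ₗ[K] Fin n → K :=
  LinearMap.funLeft K K fun i => (i : ℤ)

theorem window_apply (f : ℤ → K) (i : Fin n) : window n f i = f i := rfl

variable [NeZero n]

/-- The extension of a vector indexed by `{0, …, n - 1}` to a function on `ℤ` that is
quasi-periodic of period `n` with multiplier `χ`. -/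
def quasiperiodicExt (χ : K) : (Fin n → K) →ₗ[K] ℤ → K :=
  LinearMap.pi fun x => χ ^ (x / n) • LinearMap.proj (Int.divModEquiv n x).2

theorem quasiperiodicExt_apply (v : Fin n → K) (x : ℤ) :
    quasiperiodicExt χ v x = χ ^ (x / n) * v (Int.divModEquiv n x).2 := rfl

theorem divModEquiv_int_mul_add (q : ℤ) (i : Fin n) :
    Int.divModEquiv n (q * n + i) = (q, i) :=
  (Int.divModEquiv n).apply_symm_apply (q, i)

theorem exists_int_mul_add (n : ℕ) [NeZero n] (x : ℤ) : ∃ (q : ℤ) (i : Fin n), x = q * n + i :=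
  ⟨_, _, ((Int.divModEquiv n).symm_apply_apply x).symm⟩

theorem quasiperiodicExt_int_mul_add (v : Fin n → K) (q : ℤ) (i : Fin n) :
    quasiperiodicExt χ v (q * n + i) = χ ^ q * v i := by
  have hdiv : (q * n + i : ℤ) / n = q := congrArg Prod.fst (divModEquiv_int_mul_add q i)
  rw [quasiperiodicExt_apply, divModEquiv_int_mul_add, hdiv]

theorem quasiperiodicExt_natCast (v : Fin n → K) (i : Fin n) :
    quasiperiodicExt χ v (i : ℤ) = v i := by
  simpa using quasiperiodicExt_int_mul_add (χ := χ) v 0 i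

theorem window_quasiperiodicExt (v : Fin n → K) : window n (quasiperiodicExt χ v) = v :=
  funext (quasiperiodicExt_natCast v)

theorem quasiperiodicExt_injective :
    Function.Injective (quasiperiodicExt χ : (Fin n → K) →ₗ[K] ℤ → K) :=
  Function.LeftInverse.injective window_quasiperiodicExt

theorem isQuasiperiodic_quasiperiodicExt (hχ : χ ≠ 0) (v : Fin n → K) :
    IsQuasiperiodic (quasiperiodicExt χ v) n χ := fun x => by
  obtain ⟨q, i, rfl⟩ := exists_int_mul_add n x
  rw [show q * (n : ℤ) + i + n = (q + 1) * n + i by ring, quasiperiodicExt_int_mul_add,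
    quasiperiodicExt_int_mul_add, zpow_add_one₀ hχ]
  ring

theorem IsQuasiperiodic.quasiperiodicExt_window (hf : IsQuasiperiodic f n χ) (hχ : χ ≠ 0) :
    quasiperiodicExt χ (window n f) = f := by
  ext x
  obtain ⟨q, i, rfl⟩ := exists_int_mul_add n x
  rw [quasiperiodicExt_int_mul_add, window_apply, add_comm, hf.add_int_mul hχ]

theorem IsQuasiperiodic.eq_of_forall_fin {g : ℤ → K} (hf : IsQuasiperiodic f n χ)
    (hg : IsQuasiperiodic g n χ) (hχ : χ ≠ 0) (h : ∀ i : Fin n, f i = g i) : f = g := by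
  rw [← hf.quasiperiodicExt_window hχ, ← hg.quasiperiodicExt_window hχ]
  congr 1
  exact funext h

end Quasiperiodic

section Inflate

variable {K : Type*} [Field K] {n d : ℕ} [NeZero d] {ω : K}

/-- The embedding `K^d → K^n` which, for `n = k d`, identifies `K^d` with the vectors of `K^n`
whose quasi-periodic extension with multiplier `ω ^ k` has period `d` and multiplier `ω`. -/
def inflate (n : ℕ) (ω : K) : (Fin d → K) →ₗ[K] Fin n → K :=
  window n ∘ₗ quasiperiodicExt ω

theorem inflate_apply (t : Fin d → K) :
    inflate n ω t = window n (quasiperiodicExt ω t) := rfl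

theorem inflate_single_apply (j : Fin d) (i : Fin n) :
    inflate n ω (Pi.single j 1) i = if i.1 % d = j.1 then ω ^ (i.1 / d) else 0 := by
  have hi : (i : ℤ) = (i.1 / d : ℕ) * d + (Fin.ofNat d i : Fin d) := by
    rw [Fin.val_ofNat]
    exact_mod_cast (Nat.div_add_mod' i.1 d).symm
  rw [inflate_apply, window_apply, hi, quasiperiodicExt_int_mul_add, zpow_natCast, Pi.single_apply]
  simp only [Fin.ext_iff, Fin.val_ofNat, mul_ite, mul_one, mul_zero]

theorem range_inflate_eq_span {c : K} (hc : c ≠ 0) {e : Fin d → Fin n → K}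
    (he : ∀ j i, e j i = if i.1 % d = j.1 then c * ω ^ (i.1 / d) else 0) :
    LinearMap.range (inflate n ω : (Fin d → K) →ₗ[K] Fin n → K) =
      Submodule.span K (Set.range e) := by
  have hbasis : e = fun j => (c • inflate n ω) (Pi.basisFun K (Fin d) j) := by
    ext j i
    rw [he, Pi.basisFun_apply, LinearMap.smul_apply, Pi.smul_apply, inflate_single_apply,
      smul_eq_mul, mul_ite, mul_zero]
  rw [hbasis, Set.range_comp' (c • inflate n ω), ← LinearMap.map_span, Module.Basis.span_eq,
    ← LinearMap.range_eq_map, LinearMap.range_smul _ c hc]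

variable [NeZero n] {k : ℕ}

theorem quasiperiodicExt_inflate (hn : n = k * d) (hω : ω ≠ 0) (t : Fin d → K) :
    quasiperiodicExt (ω ^ k) (inflate n ω t) = quasiperiodicExt ω t := by
  have hqp := (isQuasiperiodic_quasiperiodicExt hω t).pow k
  rw [← hn] at hqp
  exact hqp.quasiperiodicExt_window (pow_ne_zero k hω)

theorem inflate_injective (hn : n = k * d) (hω : ω ≠ 0) :
    Function.Injective (inflate n ω : (Fin d → K) →ₗ[K] Fin n → K) := fun s t h =>
  quasiperiodicExt_injective (n := d) (χ := ω) <| by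
    rw [← quasiperiodicExt_inflate hn hω, h, quasiperiodicExt_inflate hn hω]

theorem mem_range_inflate_iff (hn : n = k * d) (hω : ω ≠ 0) {v : Fin n → K} :
    v ∈ LinearMap.range (inflate n ω : (Fin d → K) →ₗ[K] Fin n → K) ↔
      IsQuasiperiodic (quasiperiodicExt (ω ^ k) v) d ω := by
  constructor
  · rintro ⟨t, rfl⟩
    rw [quasiperiodicExt_inflate hn hω]
    exact isQuasiperiodic_quasiperiodicExt hω t
  · intro hv
    refine ⟨window d (quasiperiodicExt (ω ^ k) v), ?_⟩
    rw [inflate_apply, hv.quasiperiodicExt_window hω, window_quasiperiodicExt]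

end Inflate

section TwistedCycle

variable {n d k : ℕ} {χ ω : ℂ}

/-- The monomial matrix with `e_i ↦ e_{i-1}` for `i ≠ 0` and `e_0 ↦ χ e_{n-1}`. -/
def twistedCycle (n : ℕ) (χ : ℂ) : Matrix (Fin n) (Fin n) ℂ :=
  Matrix.of fun j i : Fin n =>
    if i.1 = 0 then (if j.1 = n - 1 then χ else 0)
    else if j.1 + 1 = i.1 then 1 else 0

variable [NeZero n] [NeZero d]

theorem twistedCycle_mulVec (v : Fin n → ℂ) (j : Fin n) :
    (twistedCycle n χ *ᵥ v) j = quasiperiodicExt χ v (j + 1) := by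
  rcases eq_or_lt_of_le (Nat.succ_le_of_lt j.2) with hj | hj
  · have hx : (j + 1 : ℤ) = (1 : ℤ) * n + (0 : Fin n) := by
      simpa using mod_cast hj
    rw [hx, quasiperiodicExt_int_mul_add, zpow_one, Matrix.mulVec, dotProduct,
      Finset.sum_eq_single 0]
    · simp [twistedCycle, ← hj]
    · intro i _ hi
      have hi0 : i.1 ≠ 0 := Fin.val_ne_zero_iff.2 hi
      rw [twistedCycle, of_apply, if_neg hi0, if_neg (i.2.trans_eq hj.symm).ne', zero_mul]
    · simp
  · rw [show (j + 1 : ℤ) = (⟨j + 1, hj⟩ : Fin n) by simp, quasiperiodicExt_natCast,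
      Matrix.mulVec, dotProduct, Finset.sum_eq_single ⟨j + 1, hj⟩]
    · simp [twistedCycle]
    · intro i _ hi
      have hij : j.1 + 1 ≠ i.1 := fun h => hi (Fin.ext h.symm)
      have hjn : j.1 ≠ n - 1 := by lia
      simp [twistedCycle, hij, hjn]
    · simp

theorem quasiperiodicExt_twistedCycle_mulVec (hχ : χ ≠ 0) (v : Fin n → ℂ) :
    quasiperiodicExt χ (twistedCycle n χ *ᵥ v) = quasiperiodicExt χ v ∘ (· + 1) :=
  (isQuasiperiodic_quasiperiodicExt hχ _).eq_of_forall_fin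
    ((isQuasiperiodic_quasiperiodicExt hχ v).comp fun x => add_right_comm x _ 1) hχ fun j => by
      rw [quasiperiodicExt_natCast, twistedCycle_mulVec, Function.comp_apply]

theorem quasiperiodicExt_twistedCycle_pow_mulVec (hχ : χ ≠ 0) (q : ℕ) (v : Fin n → ℂ) :
    quasiperiodicExt χ (twistedCycle n χ ^ q *ᵥ v) = quasiperiodicExt χ v ∘ (· + (q : ℤ)) := by
  induction q with
  | zero => simp [Function.comp_def]
  | succ q ih =>
    rw [pow_succ', ← Matrix.mulVec_mulVec, quasiperiodicExt_twistedCycle_mulVec hχ, ih]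
    ext x
    simp [add_right_comm, ← add_assoc]

theorem mem_eigSpace_twistedCycle_pow_iff (hχ : χ ≠ 0) {q : ℕ} {v : Fin n → ℂ} :
    v ∈ eigSpace (twistedCycle n χ ^ q) ω ↔ IsQuasiperiodic (quasiperiodicExt χ v) q ω := by
  rw [eigSpace, Module.End.mem_eigenspace_iff, Matrix.mulVecLin_apply,
    ← quasiperiodicExt_injective.eq_iff (f := quasiperiodicExt χ), map_smul,
    quasiperiodicExt_twistedCycle_pow_mulVec hχ, funext_iff]
  rfl

theorem range_inflate_eq_eigSpace (hn : n = k * d) (hω : ω ≠ 0) :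
    LinearMap.range (inflate n ω : (Fin d → ℂ) →ₗ[ℂ] Fin n → ℂ) =
      eigSpace (twistedCycle n (ω ^ k) ^ d) ω := by
  ext v
  rw [mem_range_inflate_iff hn hω, mem_eigSpace_twistedCycle_pow_iff (pow_ne_zero k hω)]

end TwistedCycle

section Substitutions

variable {m n d k : ℕ} {χ ω : ℂ}

theorem monomialMatrix_mulVec (θ : Fin n → ℂ) (σ : Equiv.Perm (Fin n)) (v : Fin n → ℂ)
    (i : Fin n) : (monomialMatrix θ σ *ᵥ v) i = θ i * v (σ.symm i) := by
  simp [monomialMatrix, Matrix.mulVec, dotProduct, ← Equiv.symm_apply_eq]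

theorem mem_Gimp_one_of_mulVec {M : Matrix (Fin n) (Fin n) ℂ} {θ : Fin n → ℂ}
    {τ : Fin n → Fin n} (hτ : Function.Surjective τ) (hθ : ∀ i, θ i ^ m = 1)
    (hM : ∀ v i, (M *ᵥ v) i = θ i * v (τ i)) : M ∈ Gimp m 1 n := by
  let σ := Equiv.ofBijective τ ⟨Finite.injective_iff_surjective.2 hτ, hτ⟩
  refine ⟨θ, σ.symm, hθ, ?_, Matrix.mulVec_injective ?_⟩
  · rw [Nat.div_one, ← Finset.prod_pow]
    exact Finset.prod_eq_one fun i _ => hθ i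
  · ext v i
    rw [hM, monomialMatrix_mulVec]
    rfl

variable [NeZero n] [NeZero d]

theorem mem_Gimp_one_of_quasiperiodicExt_mulVec (hχ : χ ^ m = 1)
    {M : Matrix (Fin n) (Fin n) ℂ} {T : ℤ → ℤ} (hT : Function.Surjective T)
    (hM : ∀ v, quasiperiodicExt χ (M *ᵥ v) = quasiperiodicExt χ v ∘ T) : M ∈ Gimp m 1 n := by
  let τ (i : Fin n) : Fin n := (Int.divModEquiv n (T i)).2
  have hMτ (v : Fin n → ℂ) (i : Fin n) : (M *ᵥ v) i = χ ^ (T i / n) * v (τ i) := by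
    rw [← quasiperiodicExt_natCast (χ := χ) (M *ᵥ v), hM, Function.comp_apply,
      quasiperiodicExt_apply]
  refine mem_Gimp_one_of_mulVec (fun l => ?_) (fun i => ?_) hMτ
  · obtain ⟨x, hx⟩ := hT l
    refine ⟨(Int.divModEquiv n x).2, ?_⟩
    have hone : quasiperiodicExt χ (M *ᵥ Pi.single l 1) x = 1 := by
      rw [hM, Function.comp_apply, hx, quasiperiodicExt_natCast, Pi.single_eq_same]
    by_contra hne
    rw [quasiperiodicExt_apply, hMτ, Pi.single_eq_of_ne hne, mul_zero, mul_zero] at hone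
    exact zero_ne_one hone
  · rw [← zpow_natCast, zpow_comm, zpow_natCast, hχ, _root_.one_zpow]

theorem twistedCycle_mem_Gimp_one (hm : m ≠ 0) (hχ : χ ^ m = 1) :
    twistedCycle n χ ∈ Gimp m 1 n := by
  have hχ0 : χ ≠ 0 := (IsUnit.of_pow_eq_one hχ hm).ne_zero
  exact mem_Gimp_one_of_quasiperiodicExt_mulVec hχ (Equiv.addRight (1 : ℤ)).surjective
    (quasiperiodicExt_twistedCycle_mulVec hχ0)

theorem exists_affinePerm (σ : Equiv.Perm (Fin n)) (a : Fin n → ℤ) :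
    ∃ T : ℤ ≃+c[(n : ℤ), (n : ℤ)] ℤ, ∀ i : Fin n, T i = a i * n + σ i := by
  let T : Equiv.Perm ℤ := (Int.divModEquiv n).symm.permCongr <| (Equiv.prodComm _ _).permCongr <|
    Equiv.prodShear σ fun i => Equiv.addRight (a i)
  have hT (q : ℤ) (i : Fin n) : T (q * n + i) = (q + a i) * n + σ i := by
    simp [T, Equiv.permCongr_apply, divModEquiv_int_mul_add, -Int.divModEquiv_apply]
  refine ⟨⟨T, fun x => ?_⟩, fun i => ?_⟩
  · obtain ⟨q, i, rfl⟩ := exists_int_mul_add n x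
    have hstep : q * n + i + n = (q + 1) * n + (i : ℤ) := by ring
    rw [Equiv.toFun_as_coe, hstep, hT, hT]
    ring
  · have hTi : T i = a i * n + σ i := by simpa using hT 0 i
    exact hTi

theorem exists_quasiperiodicExt_mulVec_of_mem_Gimp_one [NeZero m] (hχ : IsPrimitiveRoot χ m)
    {M : Matrix (Fin n) (Fin n) ℂ} (hM : M ∈ Gimp m 1 n) :
    ∃ T : ℤ ≃+c[(n : ℤ), (n : ℤ)] ℤ,
      ∀ v, quasiperiodicExt χ (M *ᵥ v) = quasiperiodicExt χ v ∘ T := by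
  obtain ⟨θ, σ, hθ, -, rfl⟩ := hM
  have hχ0 : χ ≠ 0 := hχ.ne_zero (NeZero.ne m)
  choose a _ ha using fun i => hχ.eq_pow_of_pow_eq_one (hθ i)
  obtain ⟨T, hT⟩ := exists_affinePerm σ.symm fun i => (a i : ℤ)
  refine ⟨T, fun v => ?_⟩
  have hcomp : IsQuasiperiodic (quasiperiodicExt χ v ∘ T) n χ :=
    (isQuasiperiodic_quasiperiodicExt hχ0 v).comp (AddConstMapClass.map_add_const T)
  refine (isQuasiperiodic_quasiperiodicExt hχ0 _).eq_of_forall_fin hcomp hχ0 fun i => ?_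
  rw [quasiperiodicExt_natCast, monomialMatrix_mulVec, Function.comp_apply, hT,
    quasiperiodicExt_int_mul_add, zpow_natCast, ha]

theorem exists_mem_Gimp_one_mulVec_inflate (hn : n = k * d) (hkm : k * m ≠ 0)
    (hω : IsPrimitiveRoot ω (k * m)) {M' : Matrix (Fin d) (Fin d) ℂ}
    (hM' : M' ∈ Gimp (k * m) 1 d) :
    ∃ M ∈ Gimp m 1 n, ∀ t, M *ᵥ inflate n ω t = inflate n ω (M' *ᵥ t) := by
  have hω0 : ω ≠ 0 := hω.ne_zero hkm
  have hχm : (ω ^ k) ^ m = 1 := by rw [← pow_mul, hω.pow_eq_one]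
  have : NeZero (k * m) := ⟨hkm⟩
  obtain ⟨T, hT⟩ := exists_quasiperiodicExt_mulVec_of_mem_Gimp_one hω hM'
  have hTn (x : ℤ) : T (x + n) = T x + n := by
    simpa [hn] using AddConstMapClass.map_add_nsmul T x k
  let M := LinearMap.toMatrix' <|
    window n ∘ₗ LinearMap.funLeft ℂ ℂ T ∘ₗ quasiperiodicExt (n := n) (ω ^ k)
  have hM (v : Fin n → ℂ) : M *ᵥ v = window n (quasiperiodicExt (ω ^ k) v ∘ T) :=
    LinearMap.toMatrix'_mulVec _ v
  have hMT (v : Fin n → ℂ) :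
      quasiperiodicExt (ω ^ k) (M *ᵥ v) = quasiperiodicExt (ω ^ k) v ∘ T := by
    have hcomp := (isQuasiperiodic_quasiperiodicExt (pow_ne_zero k hω0) v).comp hTn
    rw [hM, hcomp.quasiperiodicExt_window (pow_ne_zero k hω0)]
  refine ⟨M, mem_Gimp_one_of_quasiperiodicExt_mulVec hχm (EquivLike.surjective T) hMT,
    fun t => ?_⟩
  · rw [hM, quasiperiodicExt_inflate hn hω0, ← hT, inflate_apply]

theorem mem_Gimp_one_of_mulVec_inflate (hn : n = k * d) (hkm : k * m ≠ 0)
    (hω : IsPrimitiveRoot ω (k * m)) {M : Matrix (Fin n) (Fin n) ℂ} (hM : M ∈ Gimp m 1 n)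
    {M' : Matrix (Fin d) (Fin d) ℂ} (hMM' : ∀ t, M *ᵥ inflate n ω t = inflate n ω (M' *ᵥ t)) :
    M' ∈ Gimp (k * m) 1 d := by
  have hω0 : ω ≠ 0 := hω.ne_zero hkm
  have hχ : IsPrimitiveRoot (ω ^ k) m := hω.pow hkm.pos rfl
  have : NeZero m := ⟨right_ne_zero_of_mul hkm⟩
  obtain ⟨T, hT⟩ := exists_quasiperiodicExt_mulVec_of_mem_Gimp_one hχ hM
  refine mem_Gimp_one_of_quasiperiodicExt_mulVec hω.pow_eq_one (EquivLike.surjective T)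
    fun t => ?_
  rw [← quasiperiodicExt_inflate hn hω0, ← hMM', hT, quasiperiodicExt_inflate hn hω0]

theorem Gimp_one_eq_setOf_mulVec_inflate (hn : n = k * d) (hkm : k * m ≠ 0)
    (hω : IsPrimitiveRoot ω (k * m)) :
    Gimp (k * m) 1 d = {M' | ∃ M, M ∈ Gimp m 1 n ∧
      (∀ v ∈ LinearMap.range (inflate (d := d) n ω),
        M *ᵥ v ∈ LinearMap.range (inflate (d := d) n ω)) ∧
      ∀ t, M *ᵥ inflate n ω t = inflate n ω (M' *ᵥ t)} := by
  ext M'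
  constructor
  · intro hM'
    obtain ⟨M, hM, hMM'⟩ := exists_mem_Gimp_one_mulVec_inflate hn hkm hω hM'
    refine ⟨M, hM, ?_, hMM'⟩
    rintro _ ⟨t, rfl⟩
    exact ⟨M' *ᵥ t, (hMM' t).symm⟩
  · rintro ⟨M, hM, -, hMM'⟩
    exact mem_Gimp_one_of_mulVec_inflate hn hkm hω hM hMM'

end Substitutions

theorem statement_9_general (m n k n' : ℕ) (hm : m ≠ 0) (hn : 0 < n)
    (hkn : k ∣ n) (hn' : n' = n / k)
    (ζ : ℂ) (hζ : IsPrimitiveRoot ζ (n * m))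
    (gbar : Matrix (Fin n) (Fin n) ℂ)
    (hgbar : gbar = Matrix.of fun j i : Fin n =>
      if i.1 = 0 then (if j.1 = n - 1 then ζ ^ n else 0)
      else if j.1 + 1 = i.1 then 1 else 0)
    (E : Submodule ℂ (Fin n → ℂ))
    (hE : E = eigSpace (gbar ^ n') (ζ ^ n'))
    (echeck : Fin n' → (Fin n → ℂ))
    (hecheck : ∀ (j : Fin n') (i : Fin n),
      echeck j i = if i.1 % n' = j.1
        then (1 / (Real.sqrt k : ℂ)) * ζ ^ ((i.1 / n') * n') else 0) :
    gbar ∈ Gimp m 1 n ∧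
    E = Submodule.span ℂ (Set.range echeck) ∧
    ∃ Φ : (Fin n' → ℂ) →ₗ[ℂ] (Fin n → ℂ), Function.Injective Φ ∧
      LinearMap.range Φ = E ∧
      Gimp (k * m) 1 n' =
        {M' : Matrix (Fin n') (Fin n') ℂ | ∃ M, M ∈ Gimp m 1 n ∧
          (∀ v ∈ E, M.mulVec v ∈ E) ∧ ∀ t : Fin n' → ℂ,
            M.mulVec (Φ t) = Φ (M'.mulVec t)} := by
  have hnk : n = k * n' := by rw [hn', Nat.mul_div_cancel' hkn]
  have hkn0 : k * n' ≠ 0 := hnk ▸ hn.ne'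
  have hk : k ≠ 0 := left_ne_zero_of_mul hkn0
  have hkm : k * m ≠ 0 := mul_ne_zero hk hm
  have : NeZero n := ⟨hn.ne'⟩
  have : NeZero n' := ⟨right_ne_zero_of_mul hkn0⟩
  have hω : IsPrimitiveRoot (ζ ^ n') (k * m) := hζ.pow (mul_pos hn hm.pos) (by rw [hnk]; ring)
  have hω0 : ζ ^ n' ≠ 0 := hω.ne_zero hkm
  have hζn : ζ ^ n = (ζ ^ n') ^ k := by rw [← pow_mul, mul_comm, ← hnk]
  have hζnm : (ζ ^ n) ^ m = 1 := by rw [← pow_mul, hζ.pow_eq_one]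
  have hc : 1 / (Real.sqrt k : ℂ) ≠ 0 := by simpa using hk
  obtain rfl : gbar = twistedCycle n (ζ ^ n) := hgbar
  obtain rfl : E = LinearMap.range (inflate (d := n') n (ζ ^ n')) := by
    rw [hE, hζn, range_inflate_eq_eigSpace hnk hω0]
  refine ⟨twistedCycle_mem_Gimp_one hm hζnm, range_inflate_eq_span hc fun j i => ?_,
    inflate n (ζ ^ n'), inflate_injective hnk hω0, rfl,
    Gimp_one_eq_setOf_mulVec_inflate hnk hkm hω⟩
  rw [hecheck, mul_comm (i.1 / n'), pow_mul]

/-- Let `m ≥ 2`, let `k > 1` divide `n`, `n' = n/k`, `ζ` a primitive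
`nm`-th root of unity, `ḡ ∈ G(m,1,n)` the monomial matrix with `e_i ↦ e_{i-1}`
(`2 ≤ i ≤ n`), `e_1 ↦ ζ^n e_n`, and `E` the `ζ^{n'}`-eigenspace of `ḡ^{n'}`.  Then
`E = ℂě_1 ⊕ ... ⊕ ℂě_{n'}` with `ě_j = (1/√k) Σ_p ζ^{p n'} e_{j + p n'}`, and the
reflection subquotient `π_E(N_E)` is, via a `ℂ`-linear isomorphism `E ≅ ℂ^{n'}`, equal
to `G(km, 1, n')`: the `km`-reflection subquotient of `G(m,1,n)` is `G(km,1,n/k)`. -/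
theorem statement_9 (m n k n' : ℕ) (hm : 2 ≤ m) (hn : 0 < n) (hk : 1 < k)
    (hkn : k ∣ n) (hn' : n' = n / k)
    (ζ : ℂ) (hζ : IsPrimitiveRoot ζ (n * m))
    (gbar : Matrix (Fin n) (Fin n) ℂ)
    (hgbar : gbar = Matrix.of fun j i : Fin n =>
      if i.1 = 0 then (if j.1 = n - 1 then ζ ^ n else 0)
      else if j.1 + 1 = i.1 then 1 else 0)
    (E : Submodule ℂ (Fin n → ℂ))
    (hE : E = eigSpace (gbar ^ n') (ζ ^ n'))
    (echeck : Fin n' → (Fin n → ℂ))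
    (hecheck : ∀ (j : Fin n') (i : Fin n),
      echeck j i = if i.1 % n' = j.1
        then (1 / (Real.sqrt k : ℂ)) * ζ ^ ((i.1 / n') * n') else 0) :
    gbar ∈ Gimp m 1 n ∧
    E = Submodule.span ℂ (Set.range echeck) ∧
    ∃ Φ : (Fin n' → ℂ) →ₗ[ℂ] (Fin n → ℂ), Function.Injective Φ ∧
      LinearMap.range Φ = E ∧
      Gimp (k * m) 1 n' =
        {M' : Matrix (Fin n') (Fin n') ℂ | ∃ M, M ∈ Gimp m 1 n ∧
          (∀ v ∈ E, M.mulVec v ∈ E) ∧ ∀ t : Fin n' → ℂ,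
            M.mulVec (Φ t) = Φ (M'.mulVec t)} :=
  statement_9_general m n k n' (by lia) hn hkn hn' ζ hζ gbar hgbar E hE echeck hecheck

end
end Paper
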